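/- arXiv:1507.03350 — 2 statements merged into one kernel-verified Lean document; each statement's English description precedes it below -/
import Mathlib

section
/- Two Hermitian matrices H₁, H₂ in End(V₁ ⊗ ⋯ ⊗ Vₙ) are in the same orbit under conjugation by the local general linear group GL_d = GL(V₁) × ⋯ × GL(Vₙ) (acting via g = g₁ ⊗ ⋯ ⊗ gₙ, H ↦ gHg⁻¹) if and only if they are in the same orbit under conjugation by the local unitary group U_d = U(V₁) × ⋯ × U(Vₙ). -/
/-- The Kronecker (tensor) product `g₁ ⊗ ⋯ ⊗ gₙ` of local matrices, acting on
`V = V₁ ⊗ ⋯ ⊗ Vₙ` with basis indexed by `∀ i, Fin (d i)`. -/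
noncomputable def kron {n : ℕ} {d : Fin n → ℕ}
    (g : ∀ i, Matrix (Fin (d i)) (Fin (d i)) ℂ) :
    Matrix (∀ i, Fin (d i)) (∀ i, Fin (d i)) ℂ :=
  fun a b => ∏ i, g i (a i) (b i)

open scoped ComplexOrder

theorem kron_mul_aux {n : ℕ} {d : Fin n → ℕ} (g h : ∀ i, Matrix (Fin (d i)) (Fin (d i)) ℂ) :
    kron (fun i => g i * h i) = kron g * kron h := by
  ext a b
  simp only [kron, Matrix.mul_apply]
  rw [Finset.prod_univ_sum]
  simp [Finset.prod_mul_distrib, Fintype.piFinset_univ]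

theorem kron_one_aux {n : ℕ} {d : Fin n → ℕ} :
    kron (fun i => (1 : Matrix (Fin (d i)) (Fin (d i)) ℂ)) = 1 := by
  ext a b
  simp only [kron, Matrix.one_apply, Finset.prod_ite_zero, Finset.prod_const_one]
  simp [funext_iff]

theorem kron_star_aux {n : ℕ} {d : Fin n → ℕ} (g : ∀ i, Matrix (Fin (d i)) (Fin (d i)) ℂ) :
    kron (fun i => (g i).conjTranspose) = (kron g).conjTranspose := by
  ext a b
  simp [kron, Matrix.conjTranspose_apply]

open scoped MatrixOrder Matrix.Norms.L2Operator in
theorem sqrt_comm_aux {m : Type*} [Fintype m] [DecidableEq m] (Q H : Matrix m m ℂ)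
    (hQ : Q.PosSemidef) (h : Commute (Q * Q) H) : Commute Q H := by
  have hq : 0 ≤ Q := hQ.nonneg
  have e : CFC.sqrt (Q * Q) = Q := CFC.sqrt_mul_self Q hq
  rw [← e, CFC.sqrt_eq_cfc]
  exact Commute.cfc_nnreal h _

open scoped MatrixOrder Matrix.Norms.L2Operator in
theorem sqrt_exists_aux {m : Type*} [Fintype m] [DecidableEq m] (P : Matrix m m ℂ)
    (hP : P.PosSemidef) : ∃ s : Matrix m m ℂ, s.PosSemidef ∧ s * s = P :=
  ⟨CFC.sqrt P, Matrix.nonneg_iff_posSemidef.1 (CFC.sqrt_nonneg P), CFC.sqrt_mul_sqrt_self P hP.nonneg⟩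

/-- The Kronecker (tensor) product version: local `GL` orbits versus local unitary orbits. -/
theorem stmt_2 {n : ℕ} (d : Fin n → ℕ)
    (H₁ H₂ : Matrix (∀ i, Fin (d i)) (∀ i, Fin (d i)) ℂ)
    (h1 : H₁.IsHermitian) (h2 : H₂.IsHermitian) :
    (∃ g : ∀ i, Matrix (Fin (d i)) (Fin (d i)) ℂ, (∀ i, IsUnit (g i)) ∧
      kron g * H₁ * (kron g)⁻¹ = H₂) ↔
    (∃ u : ∀ i, Matrix (Fin (d i)) (Fin (d i)) ℂ,
      (∀ i, u i ∈ Matrix.unitaryGroup (Fin (d i)) ℂ) ∧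
      kron u * H₁ * (kron u)⁻¹ = H₂) := by
  constructor
  · rintro ⟨g, hg, hH⟩
    have hex : ∀ i, ∃ s : Matrix (Fin (d i)) (Fin (d i)) ℂ, s.PosSemidef ∧
        s * s = (g i).conjTranspose * g i :=
      fun i => sqrt_exists_aux _ (Matrix.posSemidef_conjTranspose_mul_self (g i))
    choose P hP hPP using hex
    choose s hs hss using fun i => sqrt_exists_aux (P i) (hP i)
    have hPu : ∀ i, IsUnit (P i) := by
      intro i
      have : IsUnit (P i * P i) := by
        rw [hPP i]
        exact ((hg i).star).mul (hg i)
      rw [Matrix.isUnit_iff_isUnit_det] at this ⊢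
      rw [Matrix.det_mul] at this
      exact isUnit_of_mul_isUnit_left this
    have hPi : ∀ i, P i * (P i)⁻¹ = 1 := fun i =>
      Matrix.mul_nonsing_inv _ ((Matrix.isUnit_iff_isUnit_det _).1 (hPu i))
    have hPi2 : ∀ i, (P i)⁻¹ * P i = 1 := fun i =>
      Matrix.nonsing_inv_mul _ ((Matrix.isUnit_iff_isUnit_det _).1 (hPu i))
    have hgi : ∀ i, (g i)⁻¹ * g i = 1 := fun i =>
      Matrix.nonsing_inv_mul _ ((Matrix.isUnit_iff_isUnit_det _).1 (hg i))
    have hG : kron (fun i => (g i)⁻¹) * kron g = 1 := by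
      rw [← kron_mul_aux]; simp only [hgi]; exact kron_one_aux
    have hGinv : (kron g)⁻¹ = kron (fun i => (g i)⁻¹) := Matrix.inv_eq_left_inv hG
    have hQ1 : kron P * kron (fun i => (P i)⁻¹) = 1 := by
      rw [← kron_mul_aux]; simp only [hPi]; exact kron_one_aux
    have hQ2 : kron (fun i => (P i)⁻¹) * kron P = 1 := by
      rw [← kron_mul_aux]; simp only [hPi2]; exact kron_one_aux
    have hQ : (kron P).PosSemidef := by
      have e : kron P = (kron s).conjTranspose * kron s := by
        rw [← kron_star_aux, ← kron_mul_aux]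
        congr 1
        funext i
        rw [(hs i).1.eq, hss]
      rw [e]
      exact Matrix.posSemidef_conjTranspose_mul_self _
    have hQQ : kron P * kron P = (kron g).conjTranspose * kron g := by
      rw [← kron_star_aux, ← kron_mul_aux, ← kron_mul_aux]
      congr 1
      funext i
      exact hPP i
    have hint : kron g * H₁ = H₂ * kron g := by
      rw [← hH, hGinv, Matrix.mul_assoc, hG, Matrix.mul_one]
    have hint2 : H₁ * (kron g).conjTranspose = (kron g).conjTranspose * H₂ := by
      have := congrArg Matrix.conjTranspose hint
      rwa [Matrix.conjTranspose_mul, Matrix.conjTranspose_mul, h1.eq, h2.eq] at this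
    have hc : Commute (kron P) H₁ := by
      apply sqrt_comm_aux _ _ hQ
      rw [hQQ]
      change _ * _ = _ * _
      rw [Matrix.mul_assoc, hint, ← Matrix.mul_assoc, ← hint2, Matrix.mul_assoc]
    have hc' : kron (fun i => (P i)⁻¹) * H₁ = H₁ * kron (fun i => (P i)⁻¹) := by
      calc kron (fun i => (P i)⁻¹) * H₁
          = kron (fun i => (P i)⁻¹) * (H₁ * kron P) * kron (fun i => (P i)⁻¹) := by
            simp only [Matrix.mul_assoc, hQ1, Matrix.mul_one]
        _ = H₁ * kron (fun i => (P i)⁻¹) := by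
            rw [← hc.eq, ← Matrix.mul_assoc, hQ2, Matrix.one_mul]
    have hu : ∀ i, g i * (P i)⁻¹ ∈ Matrix.unitaryGroup (Fin (d i)) ℂ := by
      intro i
      rw [Matrix.mem_unitaryGroup_iff', Matrix.star_eq_conjTranspose, Matrix.conjTranspose_mul,
        Matrix.conjTranspose_nonsing_inv, (hP i).1.eq]
      calc (P i)⁻¹ * (g i).conjTranspose * (g i * (P i)⁻¹)
          = (P i)⁻¹ * ((g i).conjTranspose * g i) * (P i)⁻¹ := by simp only [Matrix.mul_assoc]
        _ = ((P i)⁻¹ * P i) * (P i * (P i)⁻¹) := by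
            rw [← hPP i]; simp only [Matrix.mul_assoc]
        _ = 1 := by rw [hPi, hPi2, Matrix.one_mul]
    refine ⟨fun i => g i * (P i)⁻¹, hu, ?_⟩
    have hinv : (kron (fun i => g i * (P i)⁻¹))⁻¹ = kron P * kron (fun i => (g i)⁻¹) := by
      apply Matrix.inv_eq_left_inv
      rw [kron_mul_aux, Matrix.mul_assoc, ← Matrix.mul_assoc (kron fun i => (g i)⁻¹), hG,
        Matrix.one_mul, hQ1]
    rw [hinv, kron_mul_aux, Matrix.mul_assoc (kron g), hc', ← hH, hGinv]
    simp only [Matrix.mul_assoc]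
    rw [← Matrix.mul_assoc (kron fun i => (P i)⁻¹), hQ2, Matrix.one_mul]
  · rintro ⟨u, hu, h⟩
    refine ⟨u, fun i => ?_, h⟩
    exact IsUnit.of_mul_eq_one (star (u i)) (Matrix.mem_unitaryGroup_iff.1 (hu i))
end

section
/- Every m-tuple (M₁,…,M_m) of normal complex matrices in End(V₁⊗⋯⊗Vₙ)^{⊕m} has a closed orbit under simultaneous conjugation by the local group GL_d = GL(V₁)×⋯×GL(Vₙ). -/
open Matrix

section kronLemmas

variable {n : ℕ} {d : Fin n → ℕ}

lemma kron_mul (g h : ∀ i, Matrix (Fin (d i)) (Fin (d i)) ℂ) :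
    kron (fun i => g i * h i) = kron g * kron h := by
  ext a b
  simp only [kron, Matrix.mul_apply, ← Finset.prod_mul_distrib]
  rw [Finset.prod_univ_sum]
  simp

lemma kron_diagonal (f : ∀ i, Fin (d i) → ℂ) :
    kron (fun i => diagonal (f i)) = diagonal (fun a => ∏ i, f i (a i)) := by
  ext a b
  by_cases hab : a = b
  · subst hab; simp [kron]
  · rw [diagonal_apply_ne _ hab]
    obtain ⟨i, hi⟩ := Function.ne_iff.mp hab
    exact Finset.prod_eq_zero (Finset.mem_univ i) (by simp [diagonal_apply_ne _ hi])

lemma kron_one : kron (fun i => (1 : Matrix (Fin (d i)) (Fin (d i)) ℂ)) = 1 := by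
  have := kron_diagonal (d := d) (fun i _ => 1)
  simpa using this

lemma kron_conjTranspose (g : ∀ i, Matrix (Fin (d i)) (Fin (d i)) ℂ) :
    kron (fun i => (g i)ᴴ) = (kron g)ᴴ := by
  ext a b
  simp [kron, conjTranspose_apply]

lemma kron_inv (g : ∀ i, Matrix (Fin (d i)) (Fin (d i)) ℂ) (hg : ∀ i, IsUnit (g i)) :
    (kron g)⁻¹ = kron (fun i => (g i)⁻¹) := by
  apply Matrix.inv_eq_right_inv
  rw [← kron_mul, ← kron_one]
  congr 1
  funext i
  exact Matrix.mul_nonsing_inv _ ((Matrix.isUnit_iff_isUnit_det _).mp (hg i))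

lemma kron_isUnit (g : ∀ i, Matrix (Fin (d i)) (Fin (d i)) ℂ) (hg : ∀ i, IsUnit (g i)) :
    IsUnit (kron g) := by
  have h : kron g * kron (fun i => (g i)⁻¹) = 1 := by
    rw [← kron_mul, ← kron_one]
    congr 1
    funext i
    exact Matrix.mul_nonsing_inv _ ((Matrix.isUnit_iff_isUnit_det _).mp (hg i))
  rw [Matrix.isUnit_iff_isUnit_det]
  exact Matrix.isUnit_det_of_right_inverse h

lemma kron_tendsto {ι : Type*} {u : Filter ι}
    {g : ι → ∀ i, Matrix (Fin (d i)) (Fin (d i)) ℂ} {h : ∀ i, Matrix (Fin (d i)) (Fin (d i)) ℂ}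
    (H : ∀ i a b, Filter.Tendsto (fun k => g k i a b) u (nhds (h i a b))) :
    Filter.Tendsto (fun k => kron (g k)) u (nhds (kron h)) := by
  refine tendsto_pi_nhds.2 fun a => tendsto_pi_nhds.2 fun b => ?_
  exact tendsto_finsetProd _ fun i _ => H i (a i) (b i)

end kronLemmas

section frob

variable {N : Type*} [Fintype N] [DecidableEq N]

/-- squared Frobenius norm -/
noncomputable def frob (A : Matrix N N ℂ) : ℝ := ∑ a, ∑ b, ‖A a b‖ ^ 2

lemma frob_eq_trace (A : Matrix N N ℂ) : (frob A : ℂ) = trace (Aᴴ * A) := by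
  simp only [frob, trace, Matrix.mul_apply, conjTranspose_apply, diag_apply]
  rw [Finset.sum_comm]
  push_cast
  refine Finset.sum_congr rfl fun a _ => Finset.sum_congr rfl fun b _ => ?_
  rw [Complex.star_def, Complex.conj_mul']

lemma frob_conjTranspose (A : Matrix N N ℂ) : frob Aᴴ = frob A := by
  simp only [frob, conjTranspose_apply, norm_star]
  rw [Finset.sum_comm]

lemma frob_mul_congr {G B : Matrix N N ℂ} (h : Gᴴ * G = Bᴴ * B) (T : Matrix N N ℂ) :
    frob (G * T) = frob (B * T) := by
  have : (frob (G * T) : ℂ) = frob (B * T) := by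
    rw [frob_eq_trace, frob_eq_trace, conjTranspose_mul, conjTranspose_mul,
      Matrix.mul_assoc, Matrix.mul_assoc, ← Matrix.mul_assoc Gᴴ, ← Matrix.mul_assoc Bᴴ, h]
  exact_mod_cast this

lemma frob_mul_unitary {V : Matrix N N ℂ} (h : V * Vᴴ = 1) (A : Matrix N N ℂ) :
    frob (A * Vᴴ) = frob A := by
  rw [← frob_conjTranspose, ← frob_conjTranspose A, conjTranspose_mul, conjTranspose_conjTranspose]
  have := frob_mul_congr (G := V) (B := 1) (by simpa using mul_eq_one_comm.mp h) Aᴴ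
  simpa using this

lemma le_frob (A : Matrix N N ℂ) (a b : N) : ‖A a b‖ ^ 2 ≤ frob A := by
  refine le_trans ?_ (Finset.single_le_sum (f := fun a => ∑ b, ‖A a b‖ ^ 2)
    (fun _ _ => Finset.sum_nonneg fun _ _ => by positivity) (Finset.mem_univ a))
  exact Finset.single_le_sum (f := fun b => ‖A a b‖ ^ 2)
    (fun _ _ => by positivity) (Finset.mem_univ b)

lemma frob_nonneg (A : Matrix N N ℂ) : 0 ≤ frob A :=
  Finset.sum_nonneg fun _ _ => Finset.sum_nonneg fun _ _ => by positivity

/-- exponential diagonal matrix -/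
noncomputable def dexp (l : N → ℝ) : Matrix N N ℂ := diagonal fun a => ((Real.exp (l a) : ℝ) : ℂ)

lemma dexp_mul_neg (l : N → ℝ) : dexp l * dexp (-l) = 1 := by
  simp only [dexp, diagonal_mul_diagonal, Pi.neg_apply]
  rw [← diagonal_one]
  congr 1
  funext a
  rw [← Complex.ofReal_mul, ← Real.exp_add]
  simp

lemma dexp_neg_mul (l : N → ℝ) : dexp (-l) * dexp l = 1 := mul_eq_one_comm.mp (dexp_mul_neg l)

lemma dexp_conjTranspose (l : N → ℝ) : (dexp l)ᴴ = dexp l := by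
  simp only [dexp, diagonal_conjTranspose]
  congr 1
  funext a
  rw [Pi.star_apply, Complex.star_def, Complex.conj_ofReal]

/-- polar data -/
structure Pol (g U : Matrix N N ℂ) (l : N → ℝ) : Prop where
  u1 : U * Uᴴ = 1
  u2 : Uᴴ * U = 1
  eq : gᴴ * g = (dexp l * Uᴴ)ᴴ * (dexp l * Uᴴ)

lemma Pol.inv {g U : Matrix N N ℂ} {l : N → ℝ} (h : Pol g U l) (hg : IsUnit g) :
    Pol (g⁻¹)ᴴ U (-l) := by
  refine ⟨h.u1, h.u2, ?_⟩
  have hd := (Matrix.isUnit_iff_isUnit_det _).mp hg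
  have e1 : (g⁻¹)ᴴᴴ * (g⁻¹)ᴴ = (gᴴ * g)⁻¹ := by
    rw [conjTranspose_conjTranspose, Matrix.mul_inv_rev, conjTranspose_nonsing_inv]
  rw [e1, h.eq]
  apply Matrix.inv_eq_right_inv
  simp only [conjTranspose_mul, conjTranspose_conjTranspose, dexp_conjTranspose]
  calc U * dexp l * (dexp l * Uᴴ) * (U * dexp (-l) * (dexp (-l) * Uᴴ))
      = U * (dexp l * (dexp l * (Uᴴ * U) * dexp (-l)) * dexp (-l)) * Uᴴ := by
        simp only [Matrix.mul_assoc]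
    _ = 1 := by simp [h.u2, dexp_mul_neg, h.u1]

open scoped ComplexOrder in
lemma Pol.exists (g : Matrix N N ℂ) (hg : IsUnit g) : ∃ U l, Pol g U l := by
  have hP : (gᴴ * g).PosDef := by
    apply Matrix.PosDef.conjTranspose_mul_self
    exact Matrix.mulVec_injective_of_isUnit hg
  have hH := hP.isHermitian
  let U : Matrix N N ℂ := hH.eigenvectorUnitary
  refine ⟨U, fun a => Real.log (hH.eigenvalues a) / 2, ?_, ?_, ?_⟩
  · exact Unitary.coe_mul_star_self hH.eigenvectorUnitary
  · exact Unitary.coe_star_mul_self hH.eigenvectorUnitary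
  · conv_lhs => rw [hH.spectral_theorem]
    simp only [conjTranspose_mul, conjTranspose_conjTranspose, dexp_conjTranspose]
    rw [Unitary.conjStarAlgAut_apply]
    have : diagonal (RCLike.ofReal ∘ hH.eigenvalues) =
        dexp (fun a => Real.log (hH.eigenvalues a) / 2) *
        dexp (fun a => Real.log (hH.eigenvalues a) / 2) := by
      simp only [dexp, diagonal_mul_diagonal]
      congr 1
      funext a
      rw [← Complex.ofReal_mul, ← Real.exp_add, add_halves, Real.exp_log (hP.eigenvalues_pos a)]
      rfl
    rw [this]
    simp only [Matrix.mul_assoc]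
    rfl

lemma Pol.frob_mul {g U : Matrix N N ℂ} {l : N → ℝ} (h : Pol g U l) {V : Matrix N N ℂ}
    (hV : V * Vᴴ = 1) (m : N → ℝ) :
    frob (g * (V * dexp m * Vᴴ)) =
      ∑ a, ∑ b, ‖(Uᴴ * V) a b‖ ^ 2 * Real.exp (2 * (l a + m b)) := by
  rw [frob_mul_congr h.eq]
  rw [show dexp l * Uᴴ * (V * dexp m * Vᴴ) = (dexp l * (Uᴴ * V) * dexp m) * Vᴴ by
    simp only [Matrix.mul_assoc]]
  rw [frob_mul_unitary hV]
  refine Finset.sum_congr rfl fun a _ => Finset.sum_congr rfl fun b _ => ?_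
  rw [dexp, dexp, mul_diagonal, diagonal_mul]
  rw [norm_mul, norm_mul, Complex.norm_real, Complex.norm_real, Real.norm_eq_abs,
    Real.norm_eq_abs, Real.abs_exp, Real.abs_exp, two_mul, Real.exp_add, Real.exp_add]
  ring

lemma Pol.frob_self {g U : Matrix N N ℂ} {l : N → ℝ} (h : Pol g U l) :
    frob g = ∑ a, Real.exp (2 * l a) := by
  have h1 := h.frob_mul h.u1 0
  have h0 : dexp (0 : N → ℝ) = 1 := by simp [dexp]
  rw [h0, Matrix.mul_one, h.u1, Matrix.mul_one, h.u2] at h1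
  rw [h1]
  refine Finset.sum_congr rfl fun a _ => ?_
  rw [Finset.sum_eq_single a]
  · simp
  · intro b _ hb; simp [Matrix.one_apply_ne hb.symm]
  · simp

lemma Pol.frob_conj {g U : Matrix N N ℂ} {l : N → ℝ} (h : Pol g U l) (hg : IsUnit g)
    (M : Matrix N N ℂ) (a b : N) :
    ‖(Uᴴ * M * U) a b‖ ^ 2 * Real.exp (2 * (l a - l b)) ≤ frob (g * M * g⁻¹) := by
  have e : frob (g * M * g⁻¹) = frob (dexp (-l) * (Uᴴ * M * U)ᴴ * dexp l) := by
    rw [Matrix.mul_assoc, frob_mul_congr h.eq, ← frob_conjTranspose]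
    rw [conjTranspose_mul (dexp l * Uᴴ), conjTranspose_mul M, Matrix.mul_assoc,
      frob_mul_congr (h.inv hg).eq]
    congr 1
    simp only [conjTranspose_mul, conjTranspose_conjTranspose, dexp_conjTranspose,
      Matrix.mul_assoc]
  rw [e]
  refine le_trans (le_of_eq ?_) (le_frob _ b a)
  rw [dexp, dexp, mul_diagonal, diagonal_mul, conjTranspose_apply]
  rw [norm_mul, norm_mul, Complex.norm_real, Complex.norm_real, Real.norm_eq_abs,
    Real.norm_eq_abs, Real.abs_exp, Real.abs_exp, two_mul, Real.exp_add, norm_star,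
    sub_eq_add_neg, Real.exp_add]
  simp only [Pi.neg_apply]
  ring

/-- A normal matrix that is block triangular for a grading is block diagonal. -/
lemma normal_block {A : Matrix N N ℂ} (hA : A * Aᴴ = Aᴴ * A) (L : N → ℝ)
    (h : ∀ a b, L b < L a → A a b = 0) (a b : N) (hab : L a ≠ L b) : A a b = 0 := by
  classical
  rcases lt_or_gt_of_ne hab with hlt | hlt
  swap
  · exact h a b hlt
  have key : ∀ x, ∑ y, ‖A x y‖ ^ 2 = ∑ y, ‖A y x‖ ^ 2 := by
    intro x
    have := congrFun (congrFun hA x) x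
    simp only [Matrix.mul_apply, conjTranspose_apply, Complex.star_def, Complex.mul_conj',
      Complex.conj_mul'] at this
    exact_mod_cast this
  let S := Finset.univ.filter fun x => L b ≤ L x
  have h1 : ∑ x ∈ S, ∑ y, ‖A x y‖ ^ 2 = ∑ x ∈ S, ∑ y, ‖A y x‖ ^ 2 :=
    Finset.sum_congr rfl fun x _ => key x
  simp_rw [← Finset.sum_add_sum_compl S] at h1
  rw [Finset.sum_add_distrib, Finset.sum_add_distrib,
    Finset.sum_comm (s := S) (t := S)] at h1
  have h2 := add_left_cancel h1
  have h3 : ∑ x ∈ S, ∑ y ∈ Sᶜ, ‖A x y‖ ^ 2 = 0 := by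
    refine Finset.sum_eq_zero fun x hx => Finset.sum_eq_zero fun y hy => ?_
    simp only [S, Finset.mem_compl, Finset.mem_filter, Finset.mem_univ, true_and, not_le] at hx hy
    rw [h x y (lt_of_lt_of_le hy hx)]
    simp
  rw [h3] at h2
  have h4 := (Finset.sum_eq_zero_iff_of_nonneg
    (fun _ _ => Finset.sum_nonneg fun _ _ => by positivity)).mp h2.symm b (by simp [S])
  have h5 := (Finset.sum_eq_zero_iff_of_nonneg (fun _ _ => by positivity)).mp h4 a
    (by simpa [S] using hlt)
  simpa using h5

end frob

lemma kron_dexp {n : ℕ} {d : Fin n → ℕ} (l : ∀ i, Fin (d i) → ℝ) :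
    dexp (fun a : ∀ i, Fin (d i) => ∑ i, l i (a i)) = kron fun i => dexp (l i) := by
  simp only [dexp]
  rw [kron_diagonal]
  congr 1
  funext a
  rw [Real.exp_sum]
  push_cast
  rfl

lemma Pol.kron {n : ℕ} {d : Fin n → ℕ} {g U : ∀ i, Matrix (Fin (d i)) (Fin (d i)) ℂ}
    {l : ∀ i, Fin (d i) → ℝ} (h : ∀ i, Pol (g i) (U i) (l i)) :
    Pol (kron g) (kron U) (fun a => ∑ i, l i (a i)) := by
  refine ⟨?_, ?_, ?_⟩
  · rw [← kron_conjTranspose, ← kron_mul, ← kron_one]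
    congr 1; funext i; exact (h i).u1
  · rw [← kron_conjTranspose, ← kron_mul, ← kron_one]
    congr 1; funext i; exact (h i).u2
  · rw [kron_dexp]
    simp only [← kron_conjTranspose, ← kron_mul]
    congr 1; funext i; exact (h i).eq

lemma ultra_lim {ι E : Type*} [SeminormedAddCommGroup E] [ProperSpace E] (u : Ultrafilter ι)
    (f : ι → E) (C : ℝ)
    (h : ∀ᶠ k in (u : Filter ι), ‖f k‖ ≤ C) :
    ∃ y, Filter.Tendsto f u (nhds y) := by
  have hc : IsCompact (Metric.closedBall (0 : E) C) := isCompact_closedBall 0 C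
  obtain ⟨y, _, hy⟩ := hc.ultrafilter_le_nhds (u.map f) (by
    rw [Filter.le_principal_iff]
    change ∀ᶠ k in (u : Filter ι), f k ∈ Metric.closedBall (0 : E) C
    simpa using h)
  exact ⟨y, hy⟩

/-- size of a local group element -/
noncomputable def phi {n : ℕ} {d : Fin n → ℕ} (g : ∀ i, Matrix (Fin (d i)) (Fin (d i)) ℂ) : ℝ :=
  ∑ i, (frob (g i) + frob (g i)⁻¹)

open Filter Topology in
lemma caseB {ι : Type*} (u : Ultrafilter ι) {n m : ℕ} {d : Fin n → ℕ}
    (M : Fin m → Matrix (∀ i, Fin (d i)) (∀ i, Fin (d i)) ℂ)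
    (hnormal : ∀ j, M j * (M j)ᴴ = (M j)ᴴ * M j)
    (g : ι → ∀ i, Matrix (Fin (d i)) (Fin (d i)) ℂ) (hg : ∀ k i, IsUnit (g k i))
    (hC : ∀ j, ∃ C : ℝ, ∀ᶠ k in (u : Filter ι), frob (kron (g k) * M j * (kron (g k))⁻¹) ≤ C)
    (hphi : Tendsto (fun k => phi (g k)) u atTop)
    (hmin : ∀ s : ∀ i, Matrix (Fin (d i)) (Fin (d i)) ℂ, (∀ i, IsUnit (s i)) →
      (∀ j, kron s * M j = M j * kron s) → ∀ k, phi (g k) ≤ phi (fun i => g k i * s i) + 1) :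
    False := by
  choose U l hP using fun k i => Pol.exists (g k i) (hg k i)
  have hPi := fun k i => (hP k i).inv (hg k i)
  have hphi_eq : ∀ k, phi (g k) =
      ∑ i, (∑ a, Real.exp (2 * l k i a) + ∑ a, Real.exp (2 * -l k i a)) := by
    intro k
    refine Finset.sum_congr rfl fun i _ => ?_
    rw [(hP k i).frob_self, ← frob_conjTranspose (g k i)⁻¹, (hPi k i).frob_self]
    rfl
  have hle : ∀ k i a, |l k i a| ≤ ‖l k‖ := fun k i a =>
    (norm_le_pi_norm (l k i) a).trans (norm_le_pi_norm (l k) i)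
  -- norm tends to infinity
  have hR : Tendsto (fun k => ‖l k‖) u atTop := by
    refine tendsto_atTop.2 fun b => ?_
    filter_upwards [hphi.eventually_gt_atTop
      (∑ i, (∑ _a : Fin (d i), Real.exp (2 * b) + ∑ _a : Fin (d i), Real.exp (2 * b)))] with k hk
    by_contra hb
    push Not at hb
    refine absurd hk (not_lt.2 ?_)
    rw [hphi_eq]
    refine Finset.sum_le_sum fun i _ => add_le_add (Finset.sum_le_sum fun a _ => ?_)
      (Finset.sum_le_sum fun a _ => ?_)
    · have := (abs_le.1 (hle k i a)).2
      exact Real.exp_le_exp.2 (by linarith)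
    · have := (abs_le.1 (hle k i a)).1
      exact Real.exp_le_exp.2 (by linarith)
  have hge : ∀ᶠ k in (u : Filter ι), Real.exp (2 * ‖l k‖) ≤ phi (g k) := by
    filter_upwards [hphi.eventually_ge_atTop 1] with k hk
    have hpos : 0 < phi (g k) := by linarith
    rw [← Real.le_log_iff_exp_le hpos]
    have h0 : 0 ≤ Real.log (phi (g k)) / 2 := div_nonneg (Real.log_nonneg hk) (by norm_num)
    have : ‖l k‖ ≤ Real.log (phi (g k)) / 2 := by
      rw [pi_norm_le_iff_of_nonneg h0]
      intro i
      rw [pi_norm_le_iff_of_nonneg h0]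
      intro a
      have hterm : Real.exp (2 * l k i a) + Real.exp (2 * -l k i a) ≤ phi (g k) := by
        rw [hphi_eq]
        refine le_trans ?_ (Finset.single_le_sum
          (f := fun i => (∑ a, Real.exp (2 * l k i a) + ∑ a, Real.exp (2 * -l k i a)))
          (fun _ _ => by positivity) (Finset.mem_univ i))
        exact add_le_add
          (Finset.single_le_sum (f := fun a => Real.exp (2 * l k i a))
            (fun _ _ => by positivity) (Finset.mem_univ a))
          (Finset.single_le_sum (f := fun a => Real.exp (2 * -l k i a))
            (fun _ _ => by positivity) (Finset.mem_univ a))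
      have e1 := Real.exp_pos (2 * l k i a)
      have e2 := Real.exp_pos (2 * -l k i a)
      have h1 := (Real.le_log_iff_exp_le hpos).2 (by linarith : Real.exp (2 * l k i a) ≤ _)
      have h2 := (Real.le_log_iff_exp_le hpos).2 (by linarith : Real.exp (2 * -l k i a) ≤ _)
      rw [Real.norm_eq_abs, abs_le]
      constructor <;> linarith
    linarith
  -- limits
  have hUb : ∀ k i a b, ‖U k i a b‖ ≤ 1 := fun k i a b =>
    entry_norm_bound_of_unitary (Matrix.mem_unitaryGroup_iff.2 (hP k i).u1) a b
  have hUl : ∀ i a b, ∃ y, Tendsto (fun k => U k i a b) u (𝓝 y) := fun i a b =>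
    ultra_lim u _ 1 (Eventually.of_forall fun k => hUb k i a b)
  choose V0 hV0 using hUl
  let V : ∀ i, Matrix (Fin (d i)) (Fin (d i)) ℂ := V0
  have hV : ∀ i a b, Tendsto (fun k => U k i a b) u (𝓝 (V i a b)) := hV0
  have hVm : ∀ i, Tendsto (fun k => U k i) u (𝓝 (V i)) := fun i =>
    tendsto_pi_nhds.2 fun a => tendsto_pi_nhds.2 fun b => hV i a b
  have hVs : ∀ i, Tendsto (fun k => (U k i)ᴴ) u (𝓝 (V i)ᴴ) := fun i =>
    (continuous_id.matrix_conjTranspose.tendsto (V i)).comp (hVm i)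
  have hV1 : ∀ i, V i * (V i)ᴴ = 1 := fun i => by
    refine tendsto_nhds_unique ((hVm i).mul (hVs i)) ?_
    simp only [(hP _ i).u1]
    exact tendsto_const_nhds
  have hV2 : ∀ i, (V i)ᴴ * V i = 1 := fun i => mul_eq_one_comm.mp (hV1 i)
  have hxl : ∀ i a, ∃ y, Tendsto (fun k => l k i a / ‖l k‖) u (𝓝 y) := fun i a =>
    ultra_lim u _ 1 (Eventually.of_forall fun k => by
      rw [norm_div, norm_norm, Real.norm_eq_abs]
      exact div_le_one_of_le₀ (hle k i a) (norm_nonneg _))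
  choose x hx using hxl
  have hlx : ∀ᶠ k in (u : Filter ι), ∀ i a, l k i a = ‖l k‖ * (l k i a / ‖l k‖) := by
    filter_upwards [hR.eventually_gt_atTop 0] with k hk i a
    field_simp
  have hsl : ∀ i a, ∃ y, Tendsto (fun k => Real.exp (2 * (l k i a - ‖l k‖))) u (𝓝 y) :=
    fun i a => ultra_lim u _ 1 (Eventually.of_forall fun k => by
      have := (abs_le.1 (hle k i a)).2
      rw [Real.norm_eq_abs, Real.abs_exp, Real.exp_le_one_iff]
      linarith)
  have htl : ∀ i a, ∃ y, Tendsto (fun k => Real.exp (2 * (-l k i a - ‖l k‖))) u (𝓝 y) :=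
    fun i a => ultra_lim u _ 1 (Eventually.of_forall fun k => by
      have := (abs_le.1 (hle k i a)).1
      rw [Real.norm_eq_abs, Real.abs_exp, Real.exp_le_one_iff]
      linarith)
  choose σ hσ using hsl
  choose τ hτ using htl
  have hexp0 : ∀ (f : ι → ℝ) (c : ℝ), c < 0 → Tendsto f u (𝓝 c) →
      Tendsto (fun k => Real.exp (2 * (‖l k‖ * f k))) u (𝓝 0) := by
    intro f c hc hf
    refine Real.tendsto_exp_atBot.comp ?_
    exact (hR.atTop_mul_neg hc hf).const_mul_atBot (by norm_num)
  have hσ0 : ∀ i a, 0 ≤ σ i a := fun i a =>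
    ge_of_tendsto' (hσ i a) fun k => (Real.exp_pos _).le
  have hτ0 : ∀ i a, 0 ≤ τ i a := fun i a =>
    ge_of_tendsto' (hτ i a) fun k => (Real.exp_pos _).le
  have hσx : ∀ i a, x i a < 1 → σ i a = 0 := by
    intro i a hlt
    refine tendsto_nhds_unique (hσ i a) ((hexp0 _ (x i a - 1) (by linarith)
      ((hx i a).sub tendsto_const_nhds)).congr' ?_)
    filter_upwards [hlx] with k hk
    rw [mul_sub, ← hk, mul_one]
  have hτx : ∀ i a, -1 < x i a → τ i a = 0 := by
    intro i a hlt
    refine tendsto_nhds_unique (hτ i a) ((hexp0 _ (-x i a - 1) (by linarith)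
      ((hx i a).neg.sub tendsto_const_nhds)).congr' ?_)
    filter_upwards [hlx] with k hk
    rw [mul_sub, mul_neg, ← hk, mul_one]
  -- the limit matrices are block diagonal
  let K := kron V
  let L : (∀ i, Fin (d i)) → ℝ := fun α => ∑ i, x i (α i)
  have hK1 : K * Kᴴ = 1 := by
    simp only [K]
    rw [← kron_conjTranspose, ← kron_mul, ← kron_one]
    congr 1; funext i; exact hV1 i
  have hK2 : Kᴴ * K = 1 := mul_eq_one_comm.mp hK1
  have hKt : Tendsto (fun k => kron (U k)) u (𝓝 K) := kron_tendsto hV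
  have hKs : Tendsto (fun k => (kron (U k))ᴴ) u (𝓝 Kᴴ) :=
    (continuous_id.matrix_conjTranspose.tendsto K).comp hKt
  have hzero : ∀ j α β, L α ≠ L β → (Kᴴ * M j * K) α β = 0 := by
    intro j
    apply normal_block
    · simp only [conjTranspose_mul, conjTranspose_conjTranspose]
      calc Kᴴ * M j * K * (Kᴴ * ((M j)ᴴ * K)) = Kᴴ * (M j * (K * Kᴴ) * (M j)ᴴ) * K := by
            simp only [Matrix.mul_assoc]
        _ = Kᴴ * ((M j)ᴴ * (K * Kᴴ) * M j) * K := by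
            rw [hK1, Matrix.mul_one, Matrix.mul_one, hnormal]
        _ = _ := by simp only [Matrix.mul_assoc]
    · intro α β hlt
      obtain ⟨C, hC⟩ := hC j
      have ht : Tendsto (fun k => ((kron (U k))ᴴ * M j * kron (U k)) α β) u
          (𝓝 ((Kᴴ * M j * K) α β)) :=
        tendsto_pi_nhds.1 (tendsto_pi_nhds.1 ((hKs.mul tendsto_const_nhds).mul hKt) α) β
      have ht2 := (ht.norm.pow 2)
      have hb : ∀ᶠ k in (u : Filter ι), ‖((kron (U k))ᴴ * M j * kron (U k)) α β‖ ^ 2 ≤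
          C * Real.exp (2 * (‖l k‖ *
            (∑ i, l k i (β i) / ‖l k‖ - ∑ i, l k i (α i) / ‖l k‖))) := by
        filter_upwards [hC, hlx] with k hk hk2
        have h1 := ((Pol.kron (hP k)).frob_conj (kron_isUnit _ (hg k)) (M j) α β).trans hk
        have e : ‖l k‖ * (∑ i, l k i (β i) / ‖l k‖ - ∑ i, l k i (α i) / ‖l k‖) =
            -(∑ i, l k i (α i) - ∑ i, l k i (β i)) := by
          rw [mul_sub, Finset.mul_sum, Finset.mul_sum]
          simp only [← hk2]
          ring
        rw [e, mul_neg, Real.exp_neg, ← div_eq_mul_inv, le_div_iff₀ (Real.exp_pos _)]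
        exact h1
      have hz := (hexp0 _ (L β - L α) (by linarith)
        ((tendsto_finsetSum _ fun i _ => hx i (β i)).sub
          (tendsto_finsetSum _ fun i _ => hx i (α i)))).const_mul C
      rw [mul_zero] at hz
      have h0 := le_of_tendsto_of_tendsto ht2 hz hb
      have : ‖(Kᴴ * M j * K) α β‖ ^ 2 = 0 := le_antisymm h0 (by positivity)
      simpa using this
  -- the destabilising element
  let s : ∀ i, Matrix (Fin (d i)) (Fin (d i)) ℂ := fun i => V i * dexp (-x i) * (V i)ᴴ
  let s' : ∀ i, Matrix (Fin (d i)) (Fin (d i)) ℂ := fun i => V i * dexp (x i) * (V i)ᴴ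
  have hss : ∀ i, s i * s' i = 1 := by
    intro i
    calc s i * s' i = V i * (dexp (-x i) * ((V i)ᴴ * V i) * dexp (x i)) * (V i)ᴴ := by
          simp only [s, s', Matrix.mul_assoc]
      _ = 1 := by rw [hV2, Matrix.mul_one, dexp_neg_mul, Matrix.mul_one, hV1]
  have hsu : ∀ i, IsUnit (s i) := fun i =>
    (Matrix.isUnit_iff_isUnit_det _).2 (Matrix.isUnit_det_of_right_inverse (hss i))
  have hsinv : ∀ i, (s i)⁻¹ = s' i := fun i => Matrix.inv_eq_right_inv (hss i)
  have hks : kron s = K * dexp (fun α => ∑ i, (-x i) (α i)) * Kᴴ := by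
    simp only [K, kron_dexp]
    rw [← kron_conjTranspose, ← kron_mul, ← kron_mul]
  have hcomm : ∀ j, kron s * M j = M j * kron s := by
    intro j
    rw [hks]
    set D := dexp (fun α : ∀ i, Fin (d i) => ∑ i, (-x i) (α i)) with hD
    have hDN : D * (Kᴴ * M j * K) = (Kᴴ * M j * K) * D := by
      ext α β
      rw [hD, dexp, mul_diagonal, diagonal_mul]
      by_cases hL : L α = L β
      · have : ∑ i, (-x i) (α i) = ∑ i, (-x i) (β i) := by
          simp only [Pi.neg_apply, Finset.sum_neg_distrib]
          exact congrArg Neg.neg hL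
        rw [this, mul_comm]
      · rw [hzero j α β hL]; simp
    calc K * D * Kᴴ * M j = K * (D * (Kᴴ * M j * K)) * Kᴴ := by
          simp only [Matrix.mul_assoc, hK1, Matrix.mul_one]
      _ = (K * Kᴴ) * M j * (K * D * Kᴴ) := by rw [hDN]; simp only [Matrix.mul_assoc]
      _ = _ := by rw [hK1, Matrix.one_mul]
  have hmin' := hmin s hsu hcomm
  have hphis : ∀ k, phi (fun i => g k i * s i) =
      ∑ i, (∑ a, ∑ b, ‖((U k i)ᴴ * V i) a b‖ ^ 2 * Real.exp (2 * (l k i a + -x i b)) +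
        ∑ a, ∑ b, ‖((U k i)ᴴ * V i) a b‖ ^ 2 * Real.exp (2 * (-l k i a + x i b))) := by
    intro k
    refine Finset.sum_congr rfl fun i _ => ?_
    have h1 := (hP k i).frob_mul (hV1 i) (-x i)
    have h2 := (hPi k i).frob_mul (hV1 i) (x i)
    have h3 : frob (g k i * s i)⁻¹ = frob ((g k i)⁻¹ᴴ * (V i * dexp (x i) * (V i)ᴴ)) := by
      rw [Matrix.mul_inv_rev, hsinv, ← frob_conjTranspose, conjTranspose_mul]
      congr 2
      simp only [s', conjTranspose_mul, conjTranspose_conjTranspose, dexp_conjTranspose,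
        Matrix.mul_assoc]
    rw [h3, h2]
    exact congrArg (· + _) h1
  have hsplit : ∀ k (a b : ℝ), Real.exp (2 * (a + b)) =
      Real.exp (2 * ‖l k‖) * (Real.exp (2 * (a - ‖l k‖)) * Real.exp (2 * b)) := by
    intro k a b
    rw [← Real.exp_add, ← Real.exp_add]
    congr 1; ring
  let A : ℝ := ∑ i, (∑ a, σ i a + ∑ a, τ i a)
  let B : ℝ := ∑ i, (∑ a, σ i a * Real.exp (2 * -x i a) + ∑ a, τ i a * Real.exp (2 * x i a))
  have hW : ∀ i a b, Tendsto (fun k => ‖((U k i)ᴴ * V i) a b‖ ^ 2) u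
      (𝓝 (‖(1 : Matrix (Fin (d i)) (Fin (d i)) ℂ) a b‖ ^ 2)) := by
    intro i a b
    have h := (hVs i).mul (tendsto_const_nhds (x := V i))
    rw [hV2] at h
    exact ((tendsto_pi_nhds.1 (tendsto_pi_nhds.1 h a) b).norm).pow 2
  have hA : Tendsto (fun k => ∑ i, (∑ a, Real.exp (2 * (l k i a - ‖l k‖)) +
      ∑ a, Real.exp (2 * (-l k i a - ‖l k‖)))) u (𝓝 A) :=
    tendsto_finsetSum _ fun i _ => (tendsto_finsetSum _ fun a _ => hσ i a).add
      (tendsto_finsetSum _ fun a _ => hτ i a)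
  have hB : Tendsto (fun k => ∑ i, (∑ a, ∑ b, ‖((U k i)ᴴ * V i) a b‖ ^ 2 *
        (Real.exp (2 * (l k i a - ‖l k‖)) * Real.exp (2 * -x i b)) +
      ∑ a, ∑ b, ‖((U k i)ᴴ * V i) a b‖ ^ 2 *
        (Real.exp (2 * (-l k i a - ‖l k‖)) * Real.exp (2 * x i b)))) u (𝓝 B) := by
    have h : B = ∑ i, (∑ a, ∑ b, ‖(1 : Matrix (Fin (d i)) (Fin (d i)) ℂ) a b‖ ^ 2 *
        (σ i a * Real.exp (2 * -x i b)) +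
      ∑ a, ∑ b, ‖(1 : Matrix (Fin (d i)) (Fin (d i)) ℂ) a b‖ ^ 2 *
        (τ i a * Real.exp (2 * x i b))) := by
      refine Finset.sum_congr rfl fun i _ => ?_
      congr 1 <;>
      · refine Finset.sum_congr rfl fun a _ => ?_
        rw [Finset.sum_eq_single a]
        · simp
        · intro b _ hb; simp [Matrix.one_apply_ne hb.symm]
        · simp
    rw [h]
    exact tendsto_finsetSum _ fun i _ =>
      (tendsto_finsetSum _ fun a _ => tendsto_finsetSum _ fun b _ =>
        (hW i a b).mul ((hσ i a).mul tendsto_const_nhds)).add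
      (tendsto_finsetSum _ fun a _ => tendsto_finsetSum _ fun b _ =>
        (hW i a b).mul ((hτ i a).mul tendsto_const_nhds))
  have hFA : ∀ k, phi (g k) = Real.exp (2 * ‖l k‖) *
      ∑ i, (∑ a, Real.exp (2 * (l k i a - ‖l k‖)) +
      ∑ a, Real.exp (2 * (-l k i a - ‖l k‖))) := by
    intro k
    rw [hphi_eq]
    simp only [Finset.mul_sum, mul_add, ← Real.exp_add]
    refine Finset.sum_congr rfl fun i _ => ?_
    congr 1 <;>
    · refine Finset.sum_congr rfl fun a _ => ?_
      congr 1; ring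
  have hFB : ∀ k, phi (fun i => g k i * s i) = Real.exp (2 * ‖l k‖) *
      ∑ i, (∑ a, ∑ b, ‖((U k i)ᴴ * V i) a b‖ ^ 2 *
        (Real.exp (2 * (l k i a - ‖l k‖)) * Real.exp (2 * -x i b)) +
      ∑ a, ∑ b, ‖((U k i)ᴴ * V i) a b‖ ^ 2 *
        (Real.exp (2 * (-l k i a - ‖l k‖)) * Real.exp (2 * x i b))) := by
    intro k
    rw [hphis]
    simp only [hsplit k, Finset.mul_sum]
    refine Finset.sum_congr rfl fun i _ => ?_
    rw [mul_add, Finset.mul_sum, Finset.mul_sum]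
    congr 1 <;>
    · refine Finset.sum_congr rfl fun a _ => ?_
      rw [Finset.mul_sum]
      refine Finset.sum_congr rfl fun b _ => ?_
      ring
  have hA1 : 1 ≤ A := by
    refine ge_of_tendsto hA ?_
    filter_upwards [hge] with k hk
    rw [hFA] at hk
    exact le_of_mul_le_mul_left (by simpa using hk) (Real.exp_pos (2 * ‖l k‖))
  have hneg : Tendsto (fun k => Real.exp (2 * (‖l k‖ * (-1)))) u (𝓝 0) :=
    hexp0 _ (-1) (by norm_num) tendsto_const_nhds
  have hAB : A ≤ B := by
    have := le_of_tendsto_of_tendsto' hA (hB.add hneg) (fun k => by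
      have h := hmin' k
      rw [hFA, hFB] at h
      refine le_of_mul_le_mul_left ?_ (Real.exp_pos (2 * ‖l k‖))
      rw [mul_add, ← Real.exp_add]
      have e : 2 * ‖l k‖ + 2 * (‖l k‖ * (-1)) = 0 := by ring
      rw [e, Real.exp_zero]
      exact h)
    simpa using this
  have hBA : B ≤ Real.exp (-2) * A := by
    simp only [A, B, Finset.mul_sum, mul_add]
    refine Finset.sum_le_sum fun i _ => add_le_add (Finset.sum_le_sum fun a _ => ?_)
      (Finset.sum_le_sum fun a _ => ?_)
    · by_cases h : x i a < 1
      · simp [hσx i a h]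
      · rw [mul_comm]
        exact mul_le_mul_of_nonneg_right (Real.exp_le_exp.2 (by linarith)) (hσ0 i a)
    · by_cases h : -1 < x i a
      · simp [hτx i a h]
      · rw [mul_comm]
        exact mul_le_mul_of_nonneg_right (Real.exp_le_exp.2 (by linarith)) (hτ0 i a)
  have he : Real.exp (-2) < 1 := by
    rw [← Real.exp_zero]
    exact Real.exp_lt_exp.2 (by norm_num)
  nlinarith

open Filter Topology in
/-- Every `m`-tuple of normal complex matrices in `End(V₁⊗⋯⊗Vₙ)^{⊕m}` has a
closed orbit under simultaneous conjugation by the local group `GL_d = GL(V₁)×⋯×GL(Vₙ)`. -/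
theorem stmt_13 {n m : ℕ} (d : Fin n → ℕ)
    (M : Fin m → Matrix (∀ i, Fin (d i)) (∀ i, Fin (d i)) ℂ)
    (hnormal : ∀ j, M j * (M j)ᴴ = (M j)ᴴ * M j) :
    IsClosed {X : Fin m → Matrix (∀ i, Fin (d i)) (∀ i, Fin (d i)) ℂ |
      ∃ g : ∀ i, Matrix (Fin (d i)) (Fin (d i)) ℂ, (∀ i, IsUnit (g i)) ∧
        ∀ j, X j = kron g * M j * (kron g)⁻¹} := by
  set S := {X : Fin m → Matrix (∀ i, Fin (d i)) (∀ i, Fin (d i)) ℂ |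
      ∃ g : ∀ i, Matrix (Fin (d i)) (Fin (d i)) ℂ, (∀ i, IsUnit (g i)) ∧
        ∀ j, X j = kron g * M j * (kron g)⁻¹} with hS
  refine isClosed_of_closure_subset fun X hX => ?_
  have hne : NeBot (comap (Subtype.val : S → _) (𝓝 X)) := mem_closure_iff_comap_neBot.1 hX
  let u : Ultrafilter S := Ultrafilter.of (comap (Subtype.val : S → _) (𝓝 X))
  have hu : Tendsto (Subtype.val : S → _) u (𝓝 X) :=
    tendsto_iff_comap.2 (Ultrafilter.of_le _)
  have hnn : ∀ g : ∀ i, Matrix (Fin (d i)) (Fin (d i)) ℂ, 0 ≤ phi g := fun g =>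
    Finset.sum_nonneg fun i _ => add_nonneg (frob_nonneg _) (frob_nonneg _)
  -- nearly minimal representatives
  have hex : ∀ k : S, ∃ g : ∀ i, Matrix (Fin (d i)) (Fin (d i)) ℂ,
      ((∀ i, IsUnit (g i)) ∧ ∀ j, k.1 j = kron g * M j * (kron g)⁻¹) ∧
      ∀ g' : ∀ i, Matrix (Fin (d i)) (Fin (d i)) ℂ,
      ((∀ i, IsUnit (g' i)) ∧ ∀ j, k.1 j = kron g' * M j * (kron g')⁻¹) →
        phi g ≤ phi g' + 1 := by
    intro k
    let T : Set ℝ := phi '' {g | (∀ i, IsUnit (g i)) ∧ ∀ j, k.1 j = kron g * M j * (kron g)⁻¹}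
    have hT : T.Nonempty := by
      obtain ⟨g, hg⟩ := k.2
      exact ⟨_, g, hg, rfl⟩
    have hTb : BddBelow T := ⟨0, by rintro _ ⟨g, _, rfl⟩; exact hnn g⟩
    obtain ⟨_, ⟨g, hg, rfl⟩, hlt⟩ := exists_lt_of_csInf_lt hT (lt_add_one (sInf T))
    refine ⟨g, hg, fun g' hg' => ?_⟩
    have := csInf_le hTb ⟨g', hg', rfl⟩
    linarith
  choose g hg hmin using hex
  by_cases hbd : ∃ C : ℝ, ∀ᶠ k in (u : Filter S), phi (g k) ≤ C
  · obtain ⟨C, hC⟩ := hbd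
    have hb : ∀ᶠ k in (u : Filter S), ∀ i a b, ‖g k i a b‖ ≤ C + 1 ∧ ‖(g k i)⁻¹ a b‖ ≤ C + 1 := by
      filter_upwards [hC] with k hk i a b
      have h1 := le_frob (g k i) a b
      have h2 := le_frob (g k i)⁻¹ a b
      have h3 : frob (g k i) + frob (g k i)⁻¹ ≤ phi (g k) :=
        Finset.single_le_sum (f := fun i => frob (g k i) + frob (g k i)⁻¹)
          (fun i _ => add_nonneg (frob_nonneg _) (frob_nonneg _)) (Finset.mem_univ i)
      have h4 := frob_nonneg (g k i)
      have h5 := frob_nonneg (g k i)⁻¹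
      constructor
      · nlinarith [sq_nonneg (‖g k i a b‖ - 1)]
      · nlinarith [sq_nonneg (‖(g k i)⁻¹ a b‖ - 1)]
    have l1 : ∀ i a b, ∃ y, Tendsto (fun k => g k i a b) u (𝓝 y) := fun i a b =>
      ultra_lim u _ (C + 1) (hb.mono fun k hk => (hk i a b).1)
    have l2 : ∀ i a b, ∃ y, Tendsto (fun k => (g k i)⁻¹ a b) u (𝓝 y) := fun i a b =>
      ultra_lim u _ (C + 1) (hb.mono fun k hk => (hk i a b).2)
    choose G0 hG0 using l1
    choose H0 hH0 using l2
    let G : ∀ i, Matrix (Fin (d i)) (Fin (d i)) ℂ := G0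
    let H : ∀ i, Matrix (Fin (d i)) (Fin (d i)) ℂ := H0
    have hG : ∀ i, Tendsto (fun k => g k i) u (𝓝 (G i)) := fun i =>
      tendsto_pi_nhds.2 fun a => tendsto_pi_nhds.2 fun b => hG0 i a b
    have hH : ∀ i, Tendsto (fun k => (g k i)⁻¹) u (𝓝 (H i)) := fun i =>
      tendsto_pi_nhds.2 fun a => tendsto_pi_nhds.2 fun b => hH0 i a b
    have hGH : ∀ i, G i * H i = 1 := by
      intro i
      refine tendsto_nhds_unique ((hG i).mul (hH i)) ?_
      have : ∀ k, g k i * (g k i)⁻¹ = 1 := fun k =>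
        Matrix.mul_nonsing_inv _ ((Matrix.isUnit_iff_isUnit_det _).mp ((hg k).1 i))
      simp only [this]
      exact tendsto_const_nhds
    have hGu : ∀ i, IsUnit (G i) := fun i =>
      (Matrix.isUnit_iff_isUnit_det _).2 (Matrix.isUnit_det_of_right_inverse (hGH i))
    refine ⟨G, hGu, fun j => ?_⟩
    have hinv : (kron G)⁻¹ = kron H := by
      rw [kron_inv G hGu]
      congr 1; funext i; exact Matrix.inv_eq_right_inv (hGH i)
    rw [hinv]
    have t1 : Tendsto (fun k => kron (g k)) u (𝓝 (kron G)) := kron_tendsto hG0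
    have t2 : Tendsto (fun k => kron (fun i => (g k i)⁻¹)) u (𝓝 (kron H)) := kron_tendsto hH0
    refine tendsto_nhds_unique (tendsto_pi_nhds.1 hu j) ?_
    refine ((t1.mul (tendsto_const_nhds (x := M j))).mul t2).congr fun k => ?_
    rw [(hg k).2 j, kron_inv _ (hg k).1]
  · exfalso
    push Not at hbd
    refine caseB u M hnormal g (fun k => (hg k).1) ?_ ?_ ?_
    · intro j
      have hc : Continuous (frob : Matrix (∀ i, Fin (d i)) (∀ i, Fin (d i)) ℂ → ℝ) := by
        unfold frob
        fun_prop
      have ht := (hc.tendsto (X j)).comp (tendsto_pi_nhds.1 hu j)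
      refine ⟨frob (X j) + 1, ?_⟩
      filter_upwards [ht.eventually_le_const (lt_add_one _)] with k hk
      rw [← (hg k).2 j]
      exact hk
    · refine tendsto_atTop.2 fun C => ?_
      have := hbd C
      exact this.mono fun k hk => hk.le
    · intro s hs hcomm k
      refine hmin k _ ⟨fun i => ((hg k).1 i).mul (hs i), fun j => ?_⟩
      have hk := kron_isUnit s hs
      rw [(hg k).2 j, kron_mul, Matrix.mul_inv_rev]
      have hsd := (Matrix.isUnit_iff_isUnit_det _).mp hk
      calc kron (g k) * M j * (kron (g k))⁻¹
          = kron (g k) * (M j * (kron s * (kron s)⁻¹)) * (kron (g k))⁻¹ := by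
            rw [Matrix.mul_nonsing_inv _ hsd, Matrix.mul_one]
        _ = kron (g k) * (M j * kron s * (kron s)⁻¹) * (kron (g k))⁻¹ := by
            simp only [Matrix.mul_assoc]
        _ = _ := by rw [← hcomm]; simp only [Matrix.mul_assoc]
end
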